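/- arXiv:2512.18773 — 5 statements merged into one kernel-verified Lean document; each statement's English description precedes it below -/
import Mathlib

section
/- (Average descent) For any stepsize μ ∈ (0, 1/L], the average optimality error satisfies, for every k ≥ 0, ‖s^{k+1}‖ ≤ (1 − mμ)‖s^k‖ + μ‖Δ^k‖ ≤ (1 − mμ)‖s^k‖ + μ(L/√R)‖𝒞^k‖. -/
open scoped BigOperators RealInnerProductSpace

/-!
Column sums equal to one make mixing invisible to averages: `z̄^{k+1} = z̄^k - μ ḡ^k`, and by
induction `ḡ^k` is the average of the local gradients at the `z_r^k`
(`sum_mix`). Since `∇F(z̄^k) = H s^k`, this gives `s^{k+1} = (I - μ H) s^k - μ Δ^k`.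

For `μ ≤ 1/L` the operator `I - μ H` is symmetric and its quadratic form lies between `0` and
`(1 - m μ)‖u‖²`, so its norm is at most `1 - m μ` (`norm_apply_le_of_quadratic_le`). This is the
first inequality. For the second, `Δ^k = (1/R) ∑ H_r (z_r^k - z̄^k)`, whence
`‖Δ^k‖ ≤ (L/R) ∑ ‖𝒞_r^k‖ ≤ (L/√R) ‖𝒞^k‖` by Cauchy–Schwarz.
-/

/-- A symmetric operator whose quadratic form satisfies `0 ≤ ⟪B u, u⟫ ≤ c ‖u‖²` has norm at
most `c`. -/
lemma norm_apply_le_of_quadratic_le {E : Type*} [NormedAddCommGroup E] [InnerProductSpace ℝ E]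
    (B : E →L[ℝ] E) (c : ℝ) (hc : 0 ≤ c) (hsym : ∀ u v, ⟪B u, v⟫ = ⟪u, B v⟫)
    (hpos : ∀ u, 0 ≤ ⟪B u, u⟫) (hle : ∀ u, ⟪B u, u⟫ ≤ c * ‖u‖ ^ 2) (u : E) :
    ‖B u‖ ≤ c * ‖u‖ := by
  -- polarization: `4⟪B x, y⟫ = q (x + y) - q (x - y)`, then the parallelogram law
  have key : ∀ x y : E, 4 * ⟪B x, y⟫ ≤ 2 * c * (‖x‖ ^ 2 + ‖y‖ ^ 2) := by
    intro x y
    have h1 := hle (x + y)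
    have h2 := hpos (x - y)
    have h3 := hle (x - y)
    have hp := parallelogram_law_with_norm ℝ x y
    have hyx : ⟪B y, x⟫ = ⟪B x, y⟫ := by rw [hsym, real_inner_comm]
    simp only [map_add, map_sub, inner_add_left, inner_add_right, inner_sub_left,
      inner_sub_right, hyx] at h1 h2 h3
    nlinarith [mul_nonneg hc (sq_nonneg ‖x - y‖)]
  rcases hc.eq_or_lt with rfl | hc'
  · have h := key u (B u)
    rw [real_inner_self_eq_norm_sq] at h
    have : ‖B u‖ ^ 2 = 0 := le_antisymm (by linarith) (sq_nonneg _)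
    simp [pow_eq_zero_iff] at this
    simp [this]
  -- the scaling `x = c u`, `y = B u` balances the two squares
  · have h := key (c • u) (B u)
    rw [map_smul, real_inner_smul_left, real_inner_self_eq_norm_sq, norm_smul,
      Real.norm_of_nonneg hc] at h
    have h' : ‖B u‖ ^ 2 ≤ (c * ‖u‖) ^ 2 := by
      refine le_of_mul_le_mul_left ?_ hc'
      linarith
    exact abs_le_of_sq_le_sq' h' (by positivity) |>.2

/-- Mixing with a column-stochastic matrix preserves the sum over the agents. -/
lemma sum_mix {E : Type*} [AddCommGroup E] [Module ℝ E] {R : ℕ}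
    (W : Matrix (Fin R) (Fin R) ℝ) (hW : ∀ q, ∑ r, W r q = 1) (x : Fin R → E) :
    ∑ r, ∑ q, W r q • x q = ∑ q, x q := by
  rw [Finset.sum_comm]
  simp [← Finset.sum_smul, hW]

/-- **Average descent**: for any stepsize `μ ∈ (0, 1/L]`, the average optimality
error of the gradient-tracking diffusion recursion on convex quadratic losses
satisfies `‖s^{k+1}‖ ≤ (1 − mμ)‖s^k‖ + μ‖Δ^k‖ ≤ (1 − mμ)‖s^k‖ + μ(L/√R)‖𝒞^k‖`. -/
theorem gt_diffusion_average_descent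
    (R d τ : ℕ) (hR : 0 < R) (hd : 0 < d) (hτ : 0 < τ)
    (L m : ℝ) (hm : 0 < m) (hmL : m ≤ L)
    -- quadratic local losses f_r(z) = ½⟪H_r z, z⟫ + ⟪b_r, z⟫ + c_r, given via
    -- their (symmetric PSD) Hessians and linear terms; gradients are H_r z + b_r
    (Hop : Fin R → (EuclideanSpace ℝ (Fin d) →L[ℝ] EuclideanSpace ℝ (Fin d)))
    (hHsym : ∀ r u v, ⟪Hop r u, v⟫ = ⟪u, Hop r v⟫)
    (hHpsd : ∀ r u, 0 ≤ ⟪Hop r u, u⟫)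
    (hHL : ∀ r, ‖Hop r‖ ≤ L)
    (b : Fin R → EuclideanSpace ℝ (Fin d))
    (Hbar : EuclideanSpace ℝ (Fin d) →L[ℝ] EuclideanSpace ℝ (Fin d))
    (hHbar : Hbar = (R : ℝ)⁻¹ • ∑ r, Hop r)
    (hstrong : ∀ u, m * ‖u‖ ^ 2 ≤ ⟪Hbar u, u⟫)
    (bbar : EuclideanSpace ℝ (Fin d)) (hbbar : bbar = (R : ℝ)⁻¹ • ∑ r, b r)
    -- the unique minimizer z* of F, i.e. ∇F(z*) = H z* + b̄ = 0
    (zstar : EuclideanSpace ℝ (Fin d)) (hzstar : Hbar zstar + bbar = 0)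
    -- doubly stochastic mixing matrices
    (W : Fin τ → Matrix (Fin R) (Fin R) ℝ)
    (hWnonneg : ∀ l r q, 0 ≤ W l r q)
    (hWrow : ∀ l r, ∑ q, W l r q = 1)
    (hWcol : ∀ l q, ∑ r, W l r q = 1)
    (μ : ℝ) (hμ0 : 0 < μ) (hμL : μ ≤ 1 / L)
    -- the gradient-tracking diffusion recursion
    (Z G : ℕ → Fin R → EuclideanSpace ℝ (Fin d))
    (hZ : ∀ (k : ℕ) (r : Fin R), Z (k+1) r
        = ∑ q, W ⟨k % τ, Nat.mod_lt k hτ⟩ r q • (Z k q - μ • G k q))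
    (hG : ∀ (k : ℕ) (r : Fin R), G (k+1) r
        = (∑ q, W ⟨k % τ, Nat.mod_lt k hτ⟩ r q • G k q)
          + (Hop r (Z (k+1) r) + b r) - (Hop r (Z k r) + b r))
    (hG0 : ∀ r, G 0 r = Hop r (Z 0 r) + b r)
    -- s^k = z̄^k − z*, Δ^k = ḡ^k − ∇F(z̄^k), 𝒞^k = J⊥ Z^k
    (s : ℕ → EuclideanSpace ℝ (Fin d))
    (hs : ∀ k, s k = ((R : ℝ)⁻¹ • ∑ r, Z k r) - zstar)
    (Δ : ℕ → EuclideanSpace ℝ (Fin d))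
    (hΔ : ∀ k, Δ k = ((R : ℝ)⁻¹ • ∑ r, G k r)
        - (Hbar ((R : ℝ)⁻¹ • ∑ r, Z k r) + bbar))
    (C : ℕ → PiLp 2 fun _ : Fin R => EuclideanSpace ℝ (Fin d))
    (hC : ∀ (k : ℕ) (r : Fin R), C k r = Z k r - (R : ℝ)⁻¹ • ∑ q, Z k q) :
    ∀ k : ℕ,
      ‖s (k+1)‖ ≤ (1 - m * μ) * ‖s k‖ + μ * ‖Δ k‖
      ∧ (1 - m * μ) * ‖s k‖ + μ * ‖Δ k‖
          ≤ (1 - m * μ) * ‖s k‖ + μ * (L / Real.sqrt R) * ‖C k‖ := by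
  intro k
  have hRpos : (0 : ℝ) < R := Nat.cast_pos.mpr hR
  have hL : 0 < L := hm.trans_le hmL
  have hμL' : μ * L ≤ 1 := (le_div_iff₀ hL).mp hμL
  have hHbarApp : ∀ u, Hbar u = (R : ℝ)⁻¹ • ∑ r, Hop r u := by
    intro u
    simp [hHbar]
  have hHbarsym : ∀ u v, ⟪Hbar u, v⟫ = ⟪u, Hbar v⟫ := by
    intro u v
    simp only [hHbarApp, real_inner_smul_left, real_inner_smul_right, sum_inner, inner_sum, hHsym]
  have hHbarle : ∀ u, ⟪Hbar u, u⟫ ≤ L * ‖u‖ ^ 2 := by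
    intro u
    rw [hHbarApp, real_inner_smul_left, sum_inner, inv_mul_le_iff₀ hRpos]
    calc ∑ r, ⟪Hop r u, u⟫ ≤ ∑ _r : Fin R, L * ‖u‖ ^ 2 := by
          refine Finset.sum_le_sum fun r _ => (real_inner_le_norm _ _).trans ?_
          have := (Hop r).le_of_opNorm_le (hHL r) u
          nlinarith [norm_nonneg u]
      _ = R * (L * ‖u‖ ^ 2) := by simp
  have hGsum : ∀ j, ∑ r, G j r = ∑ r, (Hop r (Z j r) + b r) := by
    intro j
    induction j with
    | zero => simp only [hG0]
    | succ j ih =>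
      simp only [hG j, Finset.sum_sub_distrib, Finset.sum_add_distrib] at ih ⊢
      rw [sum_mix _ (hWcol _), ih]
      abel
  have hZsum : ∑ r, Z (k+1) r = ∑ r, Z k r - μ • ∑ r, G k r := by
    simp only [hZ k]
    rw [sum_mix _ (hWcol _), Finset.sum_sub_distrib, Finset.smul_sum]
  have hstep : s (k+1)
      = (ContinuousLinearMap.id ℝ (EuclideanSpace ℝ (Fin d)) - μ • Hbar) (s k) - μ • Δ k := by
    have hb : bbar = - Hbar zstar := (neg_eq_of_add_eq_zero_right hzstar).symm
    rw [hΔ k, hs (k+1), hs k, hZsum, hb]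
    simp only [sub_apply, smul_apply,
      ContinuousLinearMap.id_apply, map_sub]
    module
  have hcontr : ‖(ContinuousLinearMap.id ℝ (EuclideanSpace ℝ (Fin d)) - μ • Hbar) (s k)‖
      ≤ (1 - m * μ) * ‖s k‖ := by
    apply norm_apply_le_of_quadratic_le
    · nlinarith
    · intro u v
      simp [inner_sub_left, inner_sub_right, real_inner_smul_left, real_inner_smul_right, hHbarsym]
    · intro u
      simp only [sub_apply, smul_apply,
        ContinuousLinearMap.id_apply, inner_sub_left, real_inner_smul_left,
        real_inner_self_eq_norm_sq]
      nlinarith [mul_le_mul_of_nonneg_left (hHbarle u) hμ0.le,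
        mul_le_mul_of_nonneg_right hμL' (sq_nonneg ‖u‖)]
    · intro u
      simp only [sub_apply, smul_apply,
        ContinuousLinearMap.id_apply, inner_sub_left, real_inner_smul_left,
        real_inner_self_eq_norm_sq]
      nlinarith [mul_le_mul_of_nonneg_left (hstrong u) hμ0.le]
  have hΔeq : Δ k = (R : ℝ)⁻¹ • ∑ r, Hop r (C k r) := by
    rw [hΔ k, hGsum k, hHbarApp, hbbar]
    simp only [hC, map_sub, Finset.sum_sub_distrib, Finset.sum_add_distrib]
    module
  have hCS : ∑ r, ‖C k r‖ ≤ Real.sqrt R * ‖C k‖ := by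
    rw [PiLp.norm_eq_of_L2, ← Real.sqrt_mul hRpos.le]
    apply Real.le_sqrt_of_sq_le
    simpa using sq_sum_le_card_mul_sum_sq (s := Finset.univ) (f := fun r => ‖C k r‖)
  have hΔle : ‖Δ k‖ ≤ L / Real.sqrt R * ‖C k‖ := by
    calc ‖Δ k‖ ≤ (R : ℝ)⁻¹ * ∑ r, L * ‖C k r‖ := by
          rw [hΔeq, norm_smul, Real.norm_of_nonneg (inv_nonneg.mpr hRpos.le)]
          gcongr
          exact norm_sum_le_of_le _ fun r _ => (Hop r).le_of_opNorm_le (hHL r) _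
      _ ≤ (R : ℝ)⁻¹ * (L * (Real.sqrt R * ‖C k‖)) := by
          rw [← Finset.mul_sum]
          gcongr
      _ = L / Real.sqrt R * ‖C k‖ := by
          have hsq : Real.sqrt R ^ 2 = R := Real.sq_sqrt hRpos.le
          have hs0 : Real.sqrt R ≠ 0 := (Real.sqrt_pos.mpr hRpos).ne'
          field_simp
          rw [hsq]
  constructor
  · rw [hstep]
    refine (norm_sub_le _ _).trans (add_le_add hcontr ?_)
    rw [norm_smul, Real.norm_of_nonneg hμ0.le]
  · rw [mul_assoc]
    gcongr
end

section
/- (Network disagreement recursion) For every block index i ≥ 1 and every k in the block 𝓘_i = {iτ, iτ+1, …, (i+1)τ−1}, the network disagreement satisfies ‖𝒞^k‖ ≤ ε_τ ‖𝒞^{(i−1)τ}‖ + μ Σ_{j=(i−1)τ}^{k−1} ‖𝒯^j‖. -/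
open scoped BigOperators

/-!
Write `mix A` for the action `A ⊗ I_d` of an `R × R` matrix on stacked states. Since column sums of
the mixing matrices are `1`, averages are preserved, and since row sums are `1`, constants are fixed;
so the disagreements obey `𝒞^{k+1} = 𝒲^k (𝒞^k - μ 𝒯^k)`. A doubly stochastic `𝒲^k` is nonexpansive
(`norm_mix_le_of_doublyStochastic`, by convexity of the squared norm), so within a block starting at
`mτ` the perturbation accumulates additively:
`‖𝒞^{mτ+l} - (P l ⊗ I) 𝒞^{mτ}‖ ≤ μ ∑ ‖𝒯^j‖`. At `l = τ`, because `𝒞^{mτ}` has zero average, `P τ` may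
be replaced by `P τ - (1/R)𝟙𝟙ᵀ`, whose action has norm at most `ε` (`norm_mix_le`, applying the
spectral norm bound to each of the `d` coordinates). This gives the bound at the end of the block,
and nonexpansiveness alone carries it through the following one.
-/

/-- The action of `A ⊗ I_d` on a stack of `R` vectors of `ℝ^d`. -/
noncomputable def mix {R d : ℕ} (A : Matrix (Fin R) (Fin R) ℝ)
    (X : PiLp 2 fun _ : Fin R => EuclideanSpace ℝ (Fin d)) :
    PiLp 2 fun _ : Fin R => EuclideanSpace ℝ (Fin d) :=
  WithLp.toLp 2 fun r => ∑ q, A r q • X q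

lemma mix_apply {R d : ℕ} (A : Matrix (Fin R) (Fin R) ℝ)
    (X : PiLp 2 fun _ : Fin R => EuclideanSpace ℝ (Fin d)) (r : Fin R) :
    mix A X r = ∑ q, A r q • X q := rfl

lemma mix_sub {R d : ℕ} (A : Matrix (Fin R) (Fin R) ℝ)
    (X Y : PiLp 2 fun _ : Fin R => EuclideanSpace ℝ (Fin d)) :
    mix A (X - Y) = mix A X - mix A Y := by
  ext1 r
  simp [mix_apply, smul_sub]

lemma mix_one {R d : ℕ} (X : PiLp 2 fun _ : Fin R => EuclideanSpace ℝ (Fin d)) :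
    mix 1 X = X := by
  ext1 r
  simp [mix_apply, Matrix.one_apply]

lemma mix_mul {R d : ℕ} (A B : Matrix (Fin R) (Fin R) ℝ)
    (X : PiLp 2 fun _ : Fin R => EuclideanSpace ℝ (Fin d)) :
    mix (A * B) X = mix A (mix B X) := by
  ext1 r
  simp only [mix_apply, Matrix.mul_apply, Finset.sum_smul, Finset.smul_sum, smul_smul]
  exact Finset.sum_comm

/-- The spectral norm of `A ⊗ I_d` is at most that of `A`: the stack splits into its `d` coordinate
vectors in `ℝ^R`, on each of which `A` acts separately. -/
lemma norm_mix_le {R d : ℕ} (A : Matrix (Fin R) (Fin R) ℝ)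
    (X : PiLp 2 fun _ : Fin R => EuclideanSpace ℝ (Fin d)) :
    ‖mix A X‖ ≤ ‖Matrix.toEuclideanCLM (𝕜 := ℝ) A‖ * ‖X‖ := by
  have split : ∀ Y : PiLp 2 fun _ : Fin R => EuclideanSpace ℝ (Fin d),
      ‖Y‖ ^ 2 = ∑ c, ‖(WithLp.toLp 2 fun r => Y r c : EuclideanSpace ℝ (Fin R))‖ ^ 2 := by
    intro Y
    simp only [PiLp.norm_sq_eq_of_L2]
    exact Finset.sum_comm
  refine (sq_le_sq₀ (norm_nonneg _) (by positivity)).1 ?_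
  rw [mul_pow, split, split X, Finset.mul_sum]
  refine Finset.sum_le_sum fun c _ => ?_
  rw [← mul_pow]
  refine pow_le_pow_left₀ (norm_nonneg _) ?_ 2
  refine le_trans (le_of_eq ?_) ((Matrix.toEuclideanCLM (𝕜 := ℝ) A).le_opNorm _)
  congr 1
  ext r
  simp [mix_apply, Matrix.mulVec, dotProduct]

lemma norm_mix_le_of_doublyStochastic {R d : ℕ} (A : Matrix (Fin R) (Fin R) ℝ)
    (hnonneg : ∀ r q, 0 ≤ A r q) (hrow : ∀ r, ∑ q, A r q = 1) (hcol : ∀ q, ∑ r, A r q = 1)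
    (X : PiLp 2 fun _ : Fin R => EuclideanSpace ℝ (Fin d)) :
    ‖mix A X‖ ≤ ‖X‖ := by
  refine (sq_le_sq₀ (norm_nonneg _) (norm_nonneg _)).1 ?_
  rw [PiLp.norm_sq_eq_of_L2, PiLp.norm_sq_eq_of_L2]
  -- Jensen's inequality for the squared norm in each row
  have jensen : ∀ r, ‖mix A X r‖ ^ 2 ≤ ∑ q, A r q * ‖X q‖ ^ 2 := by
    intro r
    have h1 : ‖mix A X r‖ ≤ ∑ q, A r q * ‖X q‖ := by
      rw [mix_apply]
      refine (norm_sum_le _ _).trans (le_of_eq (Finset.sum_congr rfl fun q _ => ?_))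
      rw [norm_smul, Real.norm_of_nonneg (hnonneg r q)]
    refine (pow_le_pow_left₀ (norm_nonneg _) h1 2).trans ?_
    exact Real.pow_arith_mean_le_arith_mean_pow _ _ _ (fun q _ => hnonneg r q) (hrow r)
      (fun q _ => norm_nonneg _) 2
  calc ∑ r, ‖mix A X r‖ ^ 2 ≤ ∑ r, ∑ q, A r q * ‖X q‖ ^ 2 := Finset.sum_le_sum fun r _ => jensen r
    _ = ∑ q, ‖X q‖ ^ 2 := by
      rw [Finset.sum_comm]
      simp only [← Finset.sum_mul, hcol, one_mul]

/-- **Network disagreement recursion**: for every block index `i ≥ 1` and every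
`k ∈ 𝓘_i = {iτ, …, (i+1)τ−1}`, the network disagreement of the gradient-tracking
diffusion recursion satisfies
`‖𝒞^k‖ ≤ ε_τ ‖𝒞^{(i−1)τ}‖ + μ Σ_{j=(i−1)τ}^{k−1} ‖𝒯^j‖`. -/
theorem gt_diffusion_disagreement_recursion
    (R d τ : ℕ) (hR : 0 < R) (hd : 0 < d) (hτ : 0 < τ)
    (f : Fin R → EuclideanSpace ℝ (Fin d) → ℝ)
    (gf : Fin R → EuclideanSpace ℝ (Fin d) → EuclideanSpace ℝ (Fin d))
    (hgrad : ∀ r z, HasGradientAt (f r) (gf r z) z)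
    -- doubly stochastic mixing matrices
    (W : Fin τ → Matrix (Fin R) (Fin R) ℝ)
    (hWnonneg : ∀ l r q, 0 ≤ W l r q)
    (hWrow : ∀ l r, ∑ q, W l r q = 1)
    (hWcol : ∀ l q, ∑ r, W l r q = 1)
    -- block contraction: ‖W^{(τ−1)} ⋯ W^{(0)} − (1/R)𝟙𝟙ᵀ‖ = ε_τ < 1 (spectral norm)
    (P : ℕ → Matrix (Fin R) (Fin R) ℝ)
    (hP0 : P 0 = 1)
    (hPsucc : ∀ (l : ℕ) (hl : l < τ), P (l+1) = W ⟨l, hl⟩ * P l)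
    (ε : ℝ) (hε1 : ε < 1)
    (hcontr : ‖Matrix.toEuclideanCLM (𝕜 := ℝ)
        (P τ - Matrix.of fun _ _ : Fin R => (R : ℝ)⁻¹)‖ = ε)
    (μ : ℝ) (hμ : 0 < μ)
    -- the gradient-tracking diffusion recursion
    (Z G : ℕ → Fin R → EuclideanSpace ℝ (Fin d))
    (hZ : ∀ (k : ℕ) (r : Fin R), Z (k+1) r
        = ∑ q, W ⟨k % τ, Nat.mod_lt k hτ⟩ r q • (Z k q - μ • G k q))
    (hG : ∀ (k : ℕ) (r : Fin R), G (k+1) r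
        = (∑ q, W ⟨k % τ, Nat.mod_lt k hτ⟩ r q • G k q)
          + gf r (Z (k+1) r) - gf r (Z k r))
    (hG0 : ∀ r, G 0 r = gf r (Z 0 r))
    -- 𝒞^k = J⊥ Z^k and 𝒯^k = J⊥ G^k
    (C T : ℕ → PiLp 2 fun _ : Fin R => EuclideanSpace ℝ (Fin d))
    (hC : ∀ (k : ℕ) (r : Fin R), C k r = Z k r - (R : ℝ)⁻¹ • ∑ q, Z k q)
    (hT : ∀ (k : ℕ) (r : Fin R), T k r = G k r - (R : ℝ)⁻¹ • ∑ q, G k q) :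
    ∀ i k : ℕ, 1 ≤ i → i * τ ≤ k → k < (i + 1) * τ →
      ‖C k‖ ≤ ε * ‖C ((i - 1) * τ)‖ + μ * ∑ j ∈ Finset.Ico ((i - 1) * τ) k, ‖T j‖ := by
  have hR0 : (R : ℝ) ≠ 0 := by exact_mod_cast hR.ne'
  have step : ∀ k, C (k + 1) = mix (W ⟨k % τ, Nat.mod_lt k hτ⟩) (C k - μ • T k) := by
    intro k
    generalize hA : W ⟨k % τ, Nat.mod_lt k hτ⟩ = A
    have hrow : ∀ r, ∑ q, A r q = 1 := fun r => hA ▸ hWrow _ r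
    have hcol : ∀ q, ∑ r, A r q = 1 := fun q => hA ▸ hWcol _ q
    have hZA : ∀ r, Z (k + 1) r = ∑ q, A r q • (Z k q - μ • G k q) := fun r => hA ▸ hZ k r
    have hsum : ∑ r, Z (k + 1) r = ∑ q, (Z k q - μ • G k q) := by
      simp only [hZA]
      rw [Finset.sum_comm]
      simp only [← Finset.sum_smul, hcol, one_smul]
    ext1 r
    have hY : ∀ q, (C k - μ • T k) q
        = (Z k q - μ • G k q) - (R : ℝ)⁻¹ • ∑ p, (Z k p - μ • G k p) := by
      intro q
      rw [PiLp.sub_apply, PiLp.smul_apply, hC, hT, Finset.sum_sub_distrib, ← Finset.smul_sum]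
      module
    rw [hC, hsum, mix_apply, hZA]
    simp only [hY, smul_sub _ (_ - _) _, Finset.sum_sub_distrib (fun q => _ • (Z k q - _))]
    rw [← Finset.sum_smul, hrow, one_smul]
  have nonexp : ∀ l X, ‖mix (d := d) (W l) X‖ ≤ ‖X‖ := fun l X =>
    norm_mix_le_of_doublyStochastic (W l) (hWnonneg l) (hWrow l) (hWcol l) X
  have norm_muT : ∀ k, ‖μ • T k‖ = μ * ‖T k‖ := fun k => by
    rw [norm_smul, Real.norm_of_nonneg hμ.le]
  have within : ∀ m l, l ≤ τ → ‖C (m * τ + l) - mix (P l) (C (m * τ))‖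
      ≤ μ * ∑ j ∈ Finset.Ico (m * τ) (m * τ + l), ‖T j‖ := by
    intro m l
    induction l with
    | zero => intro _; simp [hP0, mix_one]
    | succ l ih =>
      intro hl
      have hmod : (m * τ + l) % τ = l := by
        rw [Nat.mul_add_mod_self_right, Nat.mod_eq_of_lt hl]
      have hWl : W ⟨(m * τ + l) % τ, Nat.mod_lt _ hτ⟩ = W ⟨l, hl⟩ := by
        congr 2
      rw [← add_assoc, step, hWl, hPsucc l hl, mix_mul, ← mix_sub,
        Finset.sum_Ico_succ_top (Nat.le_add_right _ _), mul_add, ← norm_muT]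
      refine (nonexp _ _).trans ?_
      rw [sub_right_comm]
      exact (norm_sub_le _ _).trans (add_le_add_left (ih (Nat.le_of_succ_le hl)) _)
  have mean_zero : ∀ k, ∑ q, C k q = 0 := by
    intro k
    simp only [hC, Finset.sum_sub_distrib, Finset.sum_const, Finset.card_univ, Fintype.card_fin]
    rw [← Nat.cast_smul_eq_nsmul ℝ, smul_smul, mul_inv_cancel₀ hR0, one_smul, sub_self]
  have block : ∀ m, ‖C (m * τ + τ)‖ ≤ ε * ‖C (m * τ)‖
      + μ * ∑ j ∈ Finset.Ico (m * τ) (m * τ + τ), ‖T j‖ := by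
    intro m
    have hPJ : mix (P τ) (C (m * τ))
        = mix (P τ - Matrix.of fun _ _ : Fin R => (R : ℝ)⁻¹) (C (m * τ)) := by
      ext1 r
      simp only [mix_apply, Matrix.sub_apply, Matrix.of_apply, sub_smul, Finset.sum_sub_distrib]
      rw [← Finset.smul_sum, mean_zero, smul_zero, sub_zero]
    have h1 : ‖mix (P τ) (C (m * τ))‖ ≤ ε * ‖C (m * τ)‖ := by
      rw [hPJ, ← hcontr]
      exact norm_mix_le _ _
    have h2 := within m τ le_rfl
    have h3 := norm_le_norm_add_norm_sub (mix (P τ) (C (m * τ))) (C (m * τ + τ))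
    rw [norm_sub_rev] at h3
    linarith
  have extend : ∀ m n, ‖C (m * τ + τ + n)‖ ≤ ε * ‖C (m * τ)‖
      + μ * ∑ j ∈ Finset.Ico (m * τ) (m * τ + τ + n), ‖T j‖ := by
    intro m n
    induction n with
    | zero => exact block m
    | succ n ih =>
      rw [← add_assoc, step, Finset.sum_Ico_succ_top (by omega), mul_add, ← norm_muT]
      have h1 := nonexp ⟨(m * τ + τ + n) % τ, Nat.mod_lt _ hτ⟩
        (C (m * τ + τ + n) - μ • T (m * τ + τ + n))
      have h2 := norm_sub_le (C (m * τ + τ + n)) (μ • T (m * τ + τ + n))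
      linarith
  intro i k hi hk _
  obtain ⟨m, rfl⟩ : ∃ m, i = m + 1 := ⟨i - 1, by omega⟩
  rw [Nat.succ_mul] at hk
  obtain ⟨n, rfl⟩ := Nat.exists_eq_add_of_le hk
  exact extend m n
end

section
/- (Second-order eigenvalue perturbation formula) Let H : ℝ → ℂ^{n×n} be twice differentiable at ω₀, and suppose there exist maps λ : ℝ → ℂ, r, l : ℝ → ℂ^n, and S : ℝ → ℂ^{n×n}, all sufficiently differentiable near ω₀, satisfying on a neighborhood of ω₀: H r = λ r, l* H = λ l*, l* r = 1, (H − λI) S = S (H − λI) = I − r l*, S r = 0, and l* S = 0. Then λ''(ω₀) = l(ω₀)* H''(ω₀) r(ω₀) − 2 l(ω₀)* H'(ω₀) S(ω₀) H'(ω₀) r(ω₀). -/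
/-!
Differentiating `H r = λ r` and pairing with `l*` gives `λ' = l* H' r` near `ω₀`, because
`l* (H - λ) = 0` and `l* r = 1`. Differentiating once more at `ω₀`,
`λ'' = l*' H' r + l* H'' r + l* H' r'`.

The eigenvector derivatives come from the reduced resolvent: applying `S` to
`(H - λ) r' = λ' r - H' r` gives `r' = (l* r') r - S H' r` (`eigenvector_deriv_eq`), and the same
fact for the transposed matrices gives `l*' = (l*' r) l* - l* H' S`. After substitution the
remaining terms `(l*' r + l* r') λ'` vanish, since `l* r` is constant.
-/

open scoped BigOperators
open Matrix

section Helpers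

variable {n : ℕ}

lemma hasDerivAt_dotProduct {u v : ℝ → Fin n → ℂ} {u' v' : Fin n → ℂ} {t : ℝ}
    (hu : ∀ i, HasDerivAt (fun s => u s i) (u' i) t)
    (hv : ∀ i, HasDerivAt (fun s => v s i) (v' i) t) :
    HasDerivAt (fun s => u s ⬝ᵥ v s) (u' ⬝ᵥ v t + u t ⬝ᵥ v') t := by
  simp only [dotProduct, ← Finset.sum_add_distrib]
  exact HasDerivAt.fun_sum fun i _ => (hu i).mul (hv i)

lemma hasDerivAt_mulVec {A : ℝ → Matrix (Fin n) (Fin n) ℂ} {A' : Matrix (Fin n) (Fin n) ℂ}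
    {v : ℝ → Fin n → ℂ} {v' : Fin n → ℂ} {t : ℝ}
    (hA : ∀ i j, HasDerivAt (fun s => A s i j) (A' i j) t)
    (hv : ∀ i, HasDerivAt (fun s => v s i) (v' i) t) (i : Fin n) :
    HasDerivAt (fun s => (A s *ᵥ v s) i) ((A' *ᵥ v t + A t *ᵥ v') i) t :=
  hasDerivAt_dotProduct (u := fun s => A s i) (hA i) hv

/-- The eigenvalue equation, differentiated once. -/
lemma eigen_deriv {A : ℝ → Matrix (Fin n) (Fin n) ℂ} {A' : Matrix (Fin n) (Fin n) ℂ}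
    {v : ℝ → Fin n → ℂ} {v' : Fin n → ℂ} {μ : ℝ → ℂ} {μ' : ℂ} {t : ℝ}
    (hA : ∀ i j, HasDerivAt (fun s => A s i j) (A' i j) t)
    (hv : ∀ i, HasDerivAt (fun s => v s i) (v' i) t)
    (hμ : HasDerivAt μ μ' t)
    (h : ∀ᶠ s in nhds t, A s *ᵥ v s = μ s • v s) :
    A' *ᵥ v t + A t *ᵥ v' = μ' • v t + μ t • v' := by
  funext i
  refine (hasDerivAt_mulVec hA hv i).unique
    ((hμ.mul (hv i)).congr_of_eventuallyEq ?_)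
  filter_upwards [h] with s hs
  simp [hs]

/-- The derivative of an eigenvector, up to its component along the eigenvector itself, is
`-S A' v` with `S` the reduced resolvent. -/
lemma eigenvector_deriv_eq {A A' S : Matrix (Fin n) (Fin n) ℂ} {v v' w : Fin n → ℂ} {μ μ' : ℂ}
    (h : A' *ᵥ v + A *ᵥ v' = μ' • v + μ • v')
    (hS : S * (A - μ • 1) = 1 - vecMulVec v w) (hSv : S *ᵥ v = 0) :
    v' = (w ⬝ᵥ v') • v - S *ᵥ (A' *ᵥ v) := by
  have h1 : (A - μ • 1) *ᵥ v' = μ' • v - A' *ᵥ v := by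
    rw [sub_mulVec, smul_mulVec, one_mulVec, sub_eq_sub_iff_add_eq_add, add_comm, h]
  have h2 := congrArg (fun M => M *ᵥ v') hS
  simp only [← mulVec_mulVec, h1, mulVec_sub, mulVec_smul, hSv, sub_mulVec, one_mulVec,
    vecMulVec_mulVec, smul_zero, zero_sub, op_smul_eq_smul] at h2
  rw [sub_eq_add_neg, h2]
  abel

end Helpers

/-- **Second-order eigenvalue perturbation formula**: if near `ω₀` one has
`H r = λ r`, `l* H = λ l*`, `l* r = 1`, together with the reduced resolvent `S`
satisfying `(H − λI)S = S(H − λI) = I − r l*`, `S r = 0`, `l* S = 0`, and `H`,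
`λ`, `r`, `l`, `S` are sufficiently differentiable near `ω₀` (`H`, `λ` twice at
`ω₀`), then `λ''(ω₀) = l(ω₀)* H''(ω₀) r(ω₀) − 2 l(ω₀)* H'(ω₀) S(ω₀) H'(ω₀) r(ω₀)`.
(`lstar` denotes the row vector `l(ω)*`.) -/
theorem second_order_eigenvalue_perturbation
    (n : ℕ) (ω₀ : ℝ)
    (H H1 : ℝ → Matrix (Fin n) (Fin n) ℂ) (H2 : Matrix (Fin n) (Fin n) ℂ)
    (lam lam1 : ℝ → ℂ) (lam2 : ℂ)
    (r lstar : ℝ → Fin n → ℂ) (r1 l1 : ℝ → Fin n → ℂ)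
    (S S1 : ℝ → Matrix (Fin n) (Fin n) ℂ)
    -- first derivatives on a neighborhood of ω₀
    (hH1 : ∀ᶠ ω in nhds ω₀, ∀ i j, HasDerivAt (fun t => H t i j) (H1 ω i j) ω)
    (hlam1 : ∀ᶠ ω in nhds ω₀, HasDerivAt lam (lam1 ω) ω)
    (hr1 : ∀ᶠ ω in nhds ω₀, ∀ i, HasDerivAt (fun t => r t i) (r1 ω i) ω)
    (hl1 : ∀ᶠ ω in nhds ω₀, ∀ i, HasDerivAt (fun t => lstar t i) (l1 ω i) ω)
    (hS1 : ∀ᶠ ω in nhds ω₀, ∀ i j, HasDerivAt (fun t => S t i j) (S1 ω i j) ω)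
    -- second derivatives at ω₀
    (hH2 : ∀ i j, HasDerivAt (fun ω => H1 ω i j) (H2 i j) ω₀)
    (hlam2 : HasDerivAt lam1 lam2 ω₀)
    -- eigen-relations and normalization on a neighborhood of ω₀
    (heig : ∀ᶠ ω in nhds ω₀, (H ω).mulVec (r ω) = lam ω • r ω)
    (hleft : ∀ᶠ ω in nhds ω₀, Matrix.vecMul (lstar ω) (H ω) = lam ω • lstar ω)
    (hnorm : ∀ᶠ ω in nhds ω₀, lstar ω ⬝ᵥ r ω = 1)
    -- reduced resolvent identities on a neighborhood of ω₀
    (hSl : ∀ᶠ ω in nhds ω₀,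
      (H ω - lam ω • 1) * S ω = 1 - Matrix.vecMulVec (r ω) (lstar ω))
    (hSr : ∀ᶠ ω in nhds ω₀,
      S ω * (H ω - lam ω • 1) = 1 - Matrix.vecMulVec (r ω) (lstar ω))
    (hSker : ∀ᶠ ω in nhds ω₀, (S ω).mulVec (r ω) = 0)
    (hkerS : ∀ᶠ ω in nhds ω₀, Matrix.vecMul (lstar ω) (S ω) = 0) :
    lam2 = lstar ω₀ ⬝ᵥ H2.mulVec (r ω₀)
      - 2 * (lstar ω₀ ⬝ᵥ (H1 ω₀).mulVec ((S ω₀).mulVec ((H1 ω₀).mulVec (r ω₀)))) := by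
  have hfirst : ∀ᶠ ω in nhds ω₀, lam1 ω = lstar ω ⬝ᵥ H1 ω *ᵥ r ω := by
    filter_upwards [hH1, hlam1, hr1, heig.eventually_nhds, hleft, hnorm]
      with ω hH hlam hr he hl hn
    have h := congrArg (fun v => lstar ω ⬝ᵥ v) (eigen_deriv hH hr hlam he)
    simp only [dotProduct_add, dotProduct_smul, dotProduct_mulVec _ (H ω), hl, smul_dotProduct,
      hn, smul_eq_mul, mul_one] at h
    exact (add_right_cancel h).symm
  have hH := hH1.self_of_nhds
  have hlam := hlam1.self_of_nhds
  have hr := hr1.self_of_nhds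
  have hl := hl1.self_of_nhds
  have hsecond : lam2 = l1 ω₀ ⬝ᵥ H1 ω₀ *ᵥ r ω₀
      + lstar ω₀ ⬝ᵥ (H2 *ᵥ r ω₀ + H1 ω₀ *ᵥ r1 ω₀) :=
    hlam2.unique ((hasDerivAt_dotProduct hl (hasDerivAt_mulVec hH2 hr)).congr_of_eventuallyEq
      hfirst)
  have hconst : l1 ω₀ ⬝ᵥ r ω₀ + lstar ω₀ ⬝ᵥ r1 ω₀ = 0 :=
    (hasDerivAt_dotProduct hl hr).unique
      ((hasDerivAt_const ω₀ (1 : ℂ)).congr_of_eventuallyEq hnorm)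
  have hr' : r1 ω₀ = (lstar ω₀ ⬝ᵥ r1 ω₀) • r ω₀ - S ω₀ *ᵥ (H1 ω₀ *ᵥ r ω₀) :=
    eigenvector_deriv_eq (eigen_deriv hH hr hlam heig) hSr.self_of_nhds hSker.self_of_nhds
  -- `lstar` is a right eigenvector of `Hᵀ`, whose reduced resolvent is `Sᵀ`.
  have hl' : l1 ω₀ = (r ω₀ ⬝ᵥ l1 ω₀) • lstar ω₀ - (S ω₀)ᵀ *ᵥ ((H1 ω₀)ᵀ *ᵥ lstar ω₀) := by
    refine eigenvector_deriv_eq (A := (H ω₀)ᵀ) (μ := lam ω₀) (μ' := lam1 ω₀)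
      (eigen_deriv (A := fun s => (H s)ᵀ) (fun i j => hH j i) hl hlam ?_) ?_ ?_
    · filter_upwards [hleft] with s hs
      rw [mulVec_transpose, hs]
    · have h := congrArg transpose hSl.self_of_nhds
      simpa [transpose_mul, transpose_vecMulVec] using h
    · rw [mulVec_transpose, hkerS.self_of_nhds]
  have hA : lstar ω₀ ⬝ᵥ H1 ω₀ *ᵥ r1 ω₀ = (lstar ω₀ ⬝ᵥ r1 ω₀) * lam1 ω₀
      - lstar ω₀ ⬝ᵥ H1 ω₀ *ᵥ (S ω₀ *ᵥ (H1 ω₀ *ᵥ r ω₀)) := by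
    conv_lhs => rw [hr']
    rw [mulVec_sub, mulVec_smul, dotProduct_sub, dotProduct_smul, hfirst.self_of_nhds,
      smul_eq_mul]
  have hB : l1 ω₀ ⬝ᵥ H1 ω₀ *ᵥ r ω₀ = (l1 ω₀ ⬝ᵥ r ω₀) * lam1 ω₀
      - lstar ω₀ ⬝ᵥ H1 ω₀ *ᵥ (S ω₀ *ᵥ (H1 ω₀ *ᵥ r ω₀)) := by
    conv_lhs => rw [hl']
    rw [sub_dotProduct, smul_dotProduct, hfirst.self_of_nhds, smul_eq_mul, mulVec_transpose,
      mulVec_transpose, ← dotProduct_mulVec, ← dotProduct_mulVec, dotProduct_comm (r ω₀)]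
  rw [hsecond, dotProduct_add, hA, hB]
  linear_combination lam1 ω₀ * hconst
end

section
/- Let τ ≥ 1, 0 ≤ ε_τ < 1, c_W > 0, and Q ≥ 1, and define the 3×3 matrices φ₀ = [[ε_τ,0,0],[1,ε_τ,0],[0,0,1]], φ₁ = [[0, c_Wτ, 0],[1/(c_Wτ), 1, 1],[1/(c_Wτ), 0, −1/(2Q)]], ψ₀ = [[0,0,0],[1−1/τ,0,0],[0,0,0]], ψ₁ = [[0, c_Wτ, 0],[1/(c_Wτ), 1, 1],[1/(c_Wτ), 0, 0]]. Define 𝓗(ω) = (I − ψ₀ − ψ₁(τ−1)ω)^{-1} (φ₀ + φ₁ τ ω) for ω in a neighborhood of 0 where the inverse exists. Then 𝓗 is differentiable at 0 and the (3,3) entry of its derivative satisfies e₃ᵀ 𝓗'(0) e₃ = −τ/(2Q), where e₃ = (0,0,1)ᵀ. -/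
/-!
The resolvent-type product rule gives
`d/dω [(A - ω A')⁻¹ (B + ω B')] = A⁻¹ A' A⁻¹ B + A⁻¹ B'` at `ω = 0` for invertible `A`
(`hasDerivAt_ringInverse_mul`, read entrywise in `hasDerivAt_inv_mul_entry`).
Here `A = I - ψ₀` is lower unitriangular with inverse `I + ψ₀`
(as `ψ₀² = 0`), so `e₃ᵀ A⁻¹ = e₃ᵀ`, `A⁻¹ e₃ = e₃` and `φ₀ e₃ = e₃`. The `(3,3)` entry of the
derivative is therefore `(τ - 1) (ψ₁)₃₃ + τ (φ₁)₃₃ = 0 - τ / (2Q)`.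
-/

open scoped BigOperators

/-- Product rule at `0` for `(A - ω A')⁻¹ (B + ω B')` in a complete normed algebra, where `u` is `A`
as a unit. -/
lemma hasDerivAt_ringInverse_mul {E : Type*} [NormedRing E] [NormedAlgebra ℝ E] [CompleteSpace E]
    (u : Eˣ) (A' B B' : E) :
    HasDerivAt (fun ω : ℝ => Ring.inverse ((u : E) - ω • A') * (B + ω • B'))
      (↑u⁻¹ * A' * ↑u⁻¹ * B + ↑u⁻¹ * B') 0 := by
  have hid : ∀ M : E, HasDerivAt (fun ω : ℝ => ω • M) M 0 := fun M => by
    simpa using (hasDerivAt_id (0 : ℝ)).smul_const M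
  have hA : HasDerivAt (fun ω : ℝ => (u : E) - ω • A') (-A') 0 := (hid A').const_sub _
  have hB : HasDerivAt (fun ω : ℝ => B + ω • B') B' 0 := (hid B').const_add B
  have hinv : HasDerivAt (fun ω : ℝ => Ring.inverse ((u : E) - ω • A'))
      (↑u⁻¹ * A' * ↑u⁻¹) 0 := by
    have h := hasFDerivAt_ringInverse (𝕜 := ℝ) u
    have h0 : (u : E) = (u : E) - (0 : ℝ) • A' := by simp
    rw [h0] at h
    simpa [Function.comp_def] using h.comp_hasDerivAt (0 : ℝ) hA
  simpa [Pi.mul_def] using hinv.mul hB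

-- Matrices carry no global norm; any submultiplicative one serves, since only entries are stated.
attribute [local instance] Matrix.linftyOpNormedRing Matrix.linftyOpNormedAlgebra in
/-- Product rule at `0`, entry by entry, for `(A - ω A')⁻¹ (B + ω B')`, where `R` is a right inverse
of `A`. -/
lemma hasDerivAt_inv_mul_entry {n : ℕ} (A R A' B B' : Matrix (Fin n) (Fin n) ℝ)
    (hAR : A * R = 1) (i j : Fin n) :
    HasDerivAt (fun ω : ℝ => ((A - ω • A')⁻¹ * (B + ω • B')) i j)
      ((R * A' * R * B + R * B') i j) 0 := by
  let u : (Matrix (Fin n) (Fin n) ℝ)ˣ := ⟨A, R, hAR, mul_eq_one_comm.mp hAR⟩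
  have hprod := hasDerivAt_ringInverse_mul u A' B B'
  have hentry := (LinearMap.toContinuousLinearMap
    (Matrix.entryLinearMap ℝ ℝ i j)).hasFDerivAt.comp_hasDerivAt (0 : ℝ) hprod
  simp only [Matrix.nonsing_inv_eq_ringInverse]
  exact hentry

/-- The block-recursion transfer matrix
`𝓗(ω) = (I − ψ₀ − ψ₁(τ−1)ω)⁻¹(φ₀ + φ₁τω)` is differentiable at `ω = 0`, and the
`(3,3)` entry of its derivative satisfies `e₃ᵀ 𝓗'(0) e₃ = −τ/(2Q)`. -/
theorem transfer_matrix_derivative_entry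
    (τ : ℕ) (hτ : 1 ≤ τ)
    (ε cW Q : ℝ) (hε0 : 0 ≤ ε) (hε1 : ε < 1) (hcW : 0 < cW) (hQ : 1 ≤ Q)
    (φ0 φ1 ψ0 ψ1 : Matrix (Fin 3) (Fin 3) ℝ)
    (hφ0 : φ0 = !![ε, 0, 0; 1, ε, 0; 0, 0, 1])
    (hφ1 : φ1 = !![0, cW * (τ : ℝ), 0;
                   1 / (cW * (τ : ℝ)), 1, 1;
                   1 / (cW * (τ : ℝ)), 0, -1 / (2 * Q)])
    (hψ0 : ψ0 = !![0, 0, 0; 1 - 1 / (τ : ℝ), 0, 0; 0, 0, 0])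
    (hψ1 : ψ1 = !![0, cW * (τ : ℝ), 0;
                   1 / (cW * (τ : ℝ)), 1, 1;
                   1 / (cW * (τ : ℝ)), 0, 0])
    (Hfun : ℝ → Matrix (Fin 3) (Fin 3) ℝ)
    (hH : ∀ ω, Hfun ω
        = (1 - ψ0 - (((τ : ℝ) - 1) * ω) • ψ1)⁻¹ * (φ0 + ((τ : ℝ) * ω) • φ1)) :
    (∀ i j, DifferentiableAt ℝ (fun ω => Hfun ω i j) 0)
    ∧ HasDerivAt (fun ω => Hfun ω 2 2) (-(τ : ℝ) / (2 * Q)) 0 := by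
  have hAR : (1 - ψ0) * (1 + ψ0) = 1 := by
    have hsq : ψ0 * ψ0 = 0 := by
      rw [hψ0]
      ext i j
      fin_cases i <;> fin_cases j <;> simp [Matrix.mul_apply, Fin.sum_univ_three]
    rw [sub_mul, mul_add, mul_add, hsq]
    simp
  have key := hasDerivAt_inv_mul_entry (1 - ψ0) (1 + ψ0) (((τ : ℝ) - 1) • ψ1) φ0
    ((τ : ℝ) • φ1) hAR
  have hfun : ∀ i j, (fun ω => Hfun ω i j) = fun ω : ℝ =>
      ((1 - ψ0 - ω • (((τ : ℝ) - 1) • ψ1))⁻¹ * (φ0 + ω • ((τ : ℝ) • φ1))) i j := by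
    intro i j
    funext ω
    rw [hH, smul_smul, smul_smul, mul_comm ω, mul_comm ω]
  refine ⟨fun i j => ?_, ?_⟩
  · rw [hfun]
    exact (key i j).differentiableAt
  · rw [hfun]
    convert key 2 2 using 1
    simp [hφ0, hφ1, hψ0, hψ1, Matrix.mul_apply, Fin.sum_univ_three, Matrix.one_apply]
    ring
end

section
/- (One-step gradient increment bound) In the gradient-tracking diffusion recursion, for every k ≥ 0 the stacked gradient increment satisfies ‖∇𝓕^{k+1} − ∇𝓕^k‖ ≤ L c_W ‖𝒞^k‖ + μ L² ‖𝒞^k‖ + μ L ‖𝒯^k‖ + μ √R L² ‖s^k‖, where c_W = sup_j ‖(𝒲^j − I) restricted to the range of J⊥‖ ≤ 2. -/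
/-!
Write `𝒲` for the mixing operator at step `k`. Since `𝒲 - I` annihilates consensus vectors,
`Z^{k+1} - Z^k = (𝒲 - I) 𝒞^k - μ 𝒲 G^k`, and the stacked gradient is the blockwise Hessian
applied to `Z` plus a constant, so the increment is at most
`L (c_W ‖𝒞^k‖ + μ ‖𝒲 G^k‖)`. Doubly stochastic mixing is nonexpansive in the stacked Euclidean
norm (`norm_mix_le`, by Jensen's inequality for the square), so `‖𝒲 G^k‖ ≤ ‖G^k‖`.

For the tracker, the double stochasticity of `W` gives by induction that the mean of `G^k` is the
mean of the local gradients. As `∇F(z*) = 0`, this mean is the mean of `H_r (𝒞^k_r + s^k)`.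
Averaging is itself mixing by the doubly stochastic matrix with all entries `1/R`, so the consensus
part of `G^k` has norm at most `L ‖𝒞^k + 𝟙 ⊗ s^k‖ ≤ L ‖𝒞^k‖ + √R L ‖s^k‖`.
-/

open scoped BigOperators RealInnerProductSpace

/-- Mixing by a doubly stochastic matrix is nonexpansive for the stacked Euclidean norm. -/
theorem norm_mix_le_s19 {R : ℕ} {E : Type*} [NormedAddCommGroup E] [NormedSpace ℝ E]
    (A : Matrix (Fin R) (Fin R) ℝ) (h0 : ∀ r q, 0 ≤ A r q)
    (hrow : ∀ r, ∑ q, A r q = 1) (hcol : ∀ q, ∑ r, A r q = 1)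
    (x y : PiLp 2 fun _ : Fin R => E) (hy : ∀ r, y r = ∑ q, A r q • x q) :
    ‖y‖ ≤ ‖x‖ := by
  refine le_of_pow_le_pow_left₀ two_ne_zero (norm_nonneg _) ?_
  rw [PiLp.norm_sq_eq_of_L2, PiLp.norm_sq_eq_of_L2]
  have key : ∀ r, ‖y r‖ ^ 2 ≤ ∑ q, A r q * ‖x q‖ ^ 2 := by
    intro r
    have h1 : ‖y r‖ ≤ ∑ q, A r q * ‖x q‖ := by
      rw [hy]
      refine (norm_sum_le _ _).trans (Finset.sum_le_sum fun q _ => ?_)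
      rw [norm_smul, Real.norm_of_nonneg (h0 r q)]
    exact (pow_le_pow_left₀ (norm_nonneg _) h1 2).trans
      (Real.pow_arith_mean_le_arith_mean_pow _ _ _ (fun q _ => h0 r q) (hrow r)
        (fun q _ => norm_nonneg _) 2)
  calc ∑ r, ‖y r‖ ^ 2 ≤ ∑ r, ∑ q, A r q * ‖x q‖ ^ 2 := Finset.sum_le_sum fun r _ => key r
    _ = ∑ q, ‖x q‖ ^ 2 := by
      rw [Finset.sum_comm]
      refine Finset.sum_congr rfl fun q _ => ?_
      rw [← Finset.sum_mul, hcol, one_mul]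

theorem norm_blockDiag_le {R : ℕ} {E : Type*} [NormedAddCommGroup E] [NormedSpace ℝ E]
    (L : ℝ) (hL : 0 ≤ L) (H : Fin R → E →L[ℝ] E) (hH : ∀ r, ‖H r‖ ≤ L)
    (x y : PiLp 2 fun _ : Fin R => E) (hy : ∀ r, y r = H r (x r)) :
    ‖y‖ ≤ L * ‖x‖ := by
  refine le_of_pow_le_pow_left₀ two_ne_zero (by positivity) ?_
  rw [mul_pow, PiLp.norm_sq_eq_of_L2, PiLp.norm_sq_eq_of_L2, Finset.mul_sum]
  refine Finset.sum_le_sum fun r _ => ?_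
  rw [← mul_pow, hy]
  exact pow_le_pow_left₀ (norm_nonneg _) ((H r).le_of_opNorm_le (hH r) _) 2

theorem norm_consensus {R : ℕ} {E : Type*} [NormedAddCommGroup E] [NormedSpace ℝ E]
    (v : E) (y : PiLp 2 fun _ : Fin R => E) (hy : ∀ r, y r = v) :
    ‖y‖ = Real.sqrt R * ‖v‖ := by
  rw [PiLp.norm_eq_of_L2]
  simp [hy]

/-- **One-step gradient increment bound**: in the gradient-tracking diffusion
recursion on convex quadratic losses, for every `k ≥ 0` the stacked gradient
increment satisfies
`‖∇𝓕^{k+1} − ∇𝓕^k‖ ≤ L c_W ‖𝒞^k‖ + μL²‖𝒞^k‖ + μL‖𝒯^k‖ + μ√R L²‖s^k‖`,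
where `c_W ≤ 2` bounds the operator norm of `(𝒲^j − I)` restricted to the
range of `J⊥`. -/
theorem gt_diffusion_gradient_increment_bound
    (R d τ : ℕ) (hR : 0 < R) (hd : 0 < d) (hτ : 0 < τ)
    (L m : ℝ) (hm : 0 < m) (hmL : m ≤ L)
    -- quadratic local losses via symmetric PSD Hessians H_r with ‖H_r‖ ≤ L
    (Hop : Fin R → (EuclideanSpace ℝ (Fin d) →L[ℝ] EuclideanSpace ℝ (Fin d)))
    (hHsym : ∀ r u v, ⟪Hop r u, v⟫ = ⟪u, Hop r v⟫)
    (hHpsd : ∀ r u, 0 ≤ ⟪Hop r u, u⟫)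
    (hHL : ∀ r, ‖Hop r‖ ≤ L)
    (b : Fin R → EuclideanSpace ℝ (Fin d))
    (Hbar : EuclideanSpace ℝ (Fin d) →L[ℝ] EuclideanSpace ℝ (Fin d))
    (hHbar : Hbar = (R : ℝ)⁻¹ • ∑ r, Hop r)
    (hstrong : ∀ u, m * ‖u‖ ^ 2 ≤ ⟪Hbar u, u⟫)
    (bbar : EuclideanSpace ℝ (Fin d)) (hbbar : bbar = (R : ℝ)⁻¹ • ∑ r, b r)
    -- z* is the minimizer of F: ∇F(z*) = H z* + b̄ = 0
    (zstar : EuclideanSpace ℝ (Fin d)) (hzstar : Hbar zstar + bbar = 0)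
    -- doubly stochastic mixing matrices
    (W : Fin τ → Matrix (Fin R) (Fin R) ℝ)
    (hWnonneg : ∀ l r q, 0 ≤ W l r q)
    (hWrow : ∀ l r, ∑ q, W l r q = 1)
    (hWcol : ∀ l q, ∑ r, W l r q = 1)
    -- c_W bounds the operator norm of (𝒲^l − I) on the range of J⊥, and c_W ≤ 2
    (cW : ℝ) (hcW2 : cW ≤ 2)
    (hcW : ∀ (l : Fin τ) (V Vmix : PiLp 2 fun _ : Fin R => EuclideanSpace ℝ (Fin d)),
        (∑ r, V r = 0) →
        (∀ r, Vmix r = (∑ q, W l r q • V q) - V r) →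
        ‖Vmix‖ ≤ cW * ‖V‖)
    (μ : ℝ) (hμ : 0 < μ)
    -- the gradient-tracking diffusion recursion
    (Z G : ℕ → Fin R → EuclideanSpace ℝ (Fin d))
    (hZ : ∀ (k : ℕ) (r : Fin R), Z (k+1) r
        = ∑ q, W ⟨k % τ, Nat.mod_lt k hτ⟩ r q • (Z k q - μ • G k q))
    (hG : ∀ (k : ℕ) (r : Fin R), G (k+1) r
        = (∑ q, W ⟨k % τ, Nat.mod_lt k hτ⟩ r q • G k q)
          + (Hop r (Z (k+1) r) + b r) - (Hop r (Z k r) + b r))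
    (hG0 : ∀ r, G 0 r = Hop r (Z 0 r) + b r)
    -- stacked gradients ∇𝓕^k, 𝒞^k = J⊥ Z^k, 𝒯^k = J⊥ G^k, s^k = z̄^k − z*
    (gradStk : ℕ → PiLp 2 fun _ : Fin R => EuclideanSpace ℝ (Fin d))
    (hgradStk : ∀ (k : ℕ) (r : Fin R), gradStk k r = Hop r (Z k r) + b r)
    (C T : ℕ → PiLp 2 fun _ : Fin R => EuclideanSpace ℝ (Fin d))
    (hC : ∀ (k : ℕ) (r : Fin R), C k r = Z k r - (R : ℝ)⁻¹ • ∑ q, Z k q)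
    (hT : ∀ (k : ℕ) (r : Fin R), T k r = G k r - (R : ℝ)⁻¹ • ∑ q, G k q)
    (s : ℕ → EuclideanSpace ℝ (Fin d))
    (hs : ∀ k, s k = ((R : ℝ)⁻¹ • ∑ r, Z k r) - zstar) :
    ∀ k : ℕ, ‖gradStk (k+1) - gradStk k‖
        ≤ L * cW * ‖C k‖ + μ * L ^ 2 * ‖C k‖ + μ * L * ‖T k‖
          + μ * Real.sqrt R * L ^ 2 * ‖s k‖ := by
  intro k
  have hL : 0 ≤ L := hm.le.trans hmL
  have hR0 : (R : ℝ) ≠ 0 := by exact_mod_cast Nat.pos_iff_ne_zero.mp hR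
  -- gradient tracking preserves the sum of the local gradients
  have hsum : ∀ j, ∑ r, G j r = ∑ r, (Hop r (Z j r) + b r) := by
    intro j
    induction j with
    | zero => exact Finset.sum_congr rfl fun r _ => hG0 r
    | succ j ih =>
      have hmix : ∑ r, ∑ q, W ⟨j % τ, Nat.mod_lt j hτ⟩ r q • G j q = ∑ q, G j q := by
        rw [Finset.sum_comm]
        refine Finset.sum_congr rfl fun q _ => ?_
        rw [← Finset.sum_smul, hWcol, one_smul]
      rw [Finset.sum_congr rfl fun r _ => hG j r, Finset.sum_sub_distrib,
        Finset.sum_add_distrib, hmix, ih]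
      abel
  set l : Fin τ := ⟨k % τ, Nat.mod_lt k hτ⟩ with hl
  set zbar := (R : ℝ)⁻¹ • ∑ q, Z k q with hzbar
  set gbar := (R : ℝ)⁻¹ • ∑ q, G k q with hgbar
  have hCsum : ∑ r, C k r = 0 := by
    simp only [hC]
    rw [Finset.sum_sub_distrib, Finset.sum_const, Finset.card_univ, Fintype.card_fin,
      ← Nat.cast_smul_eq_nsmul ℝ, smul_smul, mul_inv_cancel₀ hR0, one_smul, sub_self]
  -- `∇F(z*) = 0` turns the mean tracker into a mean of Hessians applied to deviations from `z*`
  have hgbar' : gbar = (R : ℝ)⁻¹ • ∑ r, Hop r (C k r + s k) := by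
    have h1 : ∀ r, Hop r (C k r + s k) = (Hop r (Z k r) + b r) - (Hop r zstar + b r) := by
      intro r
      rw [hC, hs, ← hzbar, sub_add_sub_cancel, map_sub]
      abel
    have h2 : (R : ℝ)⁻¹ • ∑ r, (Hop r zstar + b r) = 0 := by
      rw [← hzstar, hHbar, hbbar, Finset.sum_add_distrib, smul_add]
      simp
    rw [Finset.sum_congr rfl fun r _ => h1 r, Finset.sum_sub_distrib, smul_sub, h2, sub_zero,
      hgbar, hsum]
  let Gs : PiLp 2 fun _ : Fin R => EuclideanSpace ℝ (Fin d) := WithLp.toLp 2 (G k)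
  let JG : PiLp 2 fun _ : Fin R => EuclideanSpace ℝ (Fin d) := WithLp.toLp 2 fun _ => gbar
  let S : PiLp 2 fun _ : Fin R => EuclideanSpace ℝ (Fin d) := WithLp.toLp 2 fun _ => s k
  let HC : PiLp 2 fun _ : Fin R => EuclideanSpace ℝ (Fin d) :=
    WithLp.toLp 2 fun r => Hop r (C k r + s k)
  let WG : PiLp 2 fun _ : Fin R => EuclideanSpace ℝ (Fin d) :=
    WithLp.toLp 2 fun r => ∑ q, W l r q • G k q
  let WC : PiLp 2 fun _ : Fin R => EuclideanSpace ℝ (Fin d) :=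
    WithLp.toLp 2 fun r => (∑ q, W l r q • C k q) - C k r
  have hS : ‖S‖ = Real.sqrt R * ‖s k‖ := norm_consensus _ _ fun _ => rfl
  have hHC : ‖HC‖ ≤ L * ‖C k + S‖ :=
    norm_blockDiag_le L hL Hop hHL _ _ fun _ => rfl
  have hJG : ‖JG‖ ≤ ‖HC‖ := by
    refine norm_mix_le_s19 (fun _ _ => (R : ℝ)⁻¹) (fun _ _ => by positivity) ?_ ?_ _ _ ?_
    · intro _
      simp [hR0]
    · intro _
      simp [hR0]
    · intro r
      change gbar = _
      rw [hgbar', Finset.smul_sum]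
  have hGs : ‖Gs‖ ≤ ‖T k‖ + ‖JG‖ := by
    have : Gs = T k + JG := by
      ext1 r
      change G k r = T k r + gbar
      rw [hT, sub_add_cancel]
    rw [this]
    exact norm_add_le _ _
  have hWG : ‖WG‖ ≤ ‖Gs‖ :=
    norm_mix_le_s19 (W l) (hWnonneg l) (hWrow l) (hWcol l) _ _ fun _ => rfl
  have hWC : ‖WC‖ ≤ cW * ‖C k‖ := hcW l _ _ hCsum fun _ => rfl
  have hinc : ‖gradStk (k+1) - gradStk k‖ ≤ L * ‖WC - μ • WG‖ := by
    refine norm_blockDiag_le L hL Hop hHL _ _ fun r => ?_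
    have hstep : (WC - μ • WG) r = Z (k+1) r - Z k r := by
      change ((∑ q, W l r q • C k q) - C k r) - μ • ∑ q, W l r q • G k q = _
      rw [hZ k r]
      simp only [hC, smul_sub, Finset.sum_sub_distrib, ← hzbar, ← Finset.sum_smul, hWrow,
        one_smul, Finset.smul_sum, smul_comm μ]
      abel
    rw [hstep, map_sub, PiLp.sub_apply, hgradStk, hgradStk]
    abel
  have hdiff : ‖WC - μ • WG‖ ≤ cW * ‖C k‖ + μ * ‖WG‖ := by
    refine (norm_sub_le _ _).trans ?_
    rw [norm_smul, Real.norm_of_nonneg hμ.le]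
    linarith
  have hWG' : ‖WG‖ ≤ ‖T k‖ + L * (‖C k‖ + Real.sqrt R * ‖s k‖) := by
    have := mul_le_mul_of_nonneg_left (hS ▸ norm_add_le (C k) S) hL
    linarith
  calc ‖gradStk (k+1) - gradStk k‖
      ≤ L * (cW * ‖C k‖ + μ * (‖T k‖ + L * (‖C k‖ + Real.sqrt R * ‖s k‖))) := by
        refine hinc.trans (mul_le_mul_of_nonneg_left (hdiff.trans ?_) hL)
        gcongr
    _ = _ := by ring
end
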